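/- arXiv:2109.09239 — 3 statements merged into one kernel-verified Lean document; each statement's English description precedes it below -/
import Mathlib

section
/- Let n ≥ 1, A > 0, σ > 0, q = e², θ ∈ ℝⁿ, and let I_* be any minimizer over I ⊆ [n] of r²(I,θ) := ∑_{i∉I} θ_i² + Aσ²·|I|·log(qn/|I|) (with the convention that the penalty is 0 for I = ∅). Then: (a) every i ∈ [n] with θ_i² > Aσ²·log(qn/(|I_*| + 1)) belongs to I_*; (b) every i ∈ I_* satisfies θ_i² ≥ Aσ²·log(en/|I_*|). -/
open MeasureTheory Finset
open scoped Classical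

/-- `ell n k = k * log(q*n/k)` with `q = e^2`; equals `0` at `k = 0` by Lean's conventions. -/
noncomputable def ell (n k : ℕ) : ℝ := (k : ℝ) * Real.log (Real.exp 2 * n / k)

theorem log_exp_mul_natCast_div (c : ℝ) {n : ℕ} (hn : 1 ≤ n) {x : ℝ} (hx : x ≠ 0) :
    Real.log (Real.exp c * n / x) = c + Real.log n - Real.log x := by
  have hn' : (n : ℝ) ≠ 0 := by positivity
  rw [Real.log_div (by positivity) hx, Real.log_mul (by positivity) hn', Real.log_exp]

theorem ell_eq {n : ℕ} (hn : 1 ≤ n) (k : ℕ) :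
    ell n k = k * (2 + Real.log n - Real.log k) := by
  rcases Nat.eq_zero_or_pos k with rfl | hk
  · simp [ell]
  · rw [ell, log_exp_mul_natCast_div 2 hn (by positivity)]

theorem natCast_mul_log_le_mul_log_succ (k : ℕ) :
    (k : ℝ) * Real.log k ≤ k * Real.log (k + 1) := by
  rcases Nat.eq_zero_or_pos k with rfl | hk
  · simp
  · gcongr
    linarith

theorem natCast_mul_log_succ_le (k : ℕ) :
    (k : ℝ) * Real.log (k + 1) ≤ k * Real.log k + 1 := by
  rcases Nat.eq_zero_or_pos k with rfl | hk
  · simp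
  · have hk' : (0 : ℝ) < k := by positivity
    have h := Real.log_le_sub_one_of_pos (show (0 : ℝ) < (k + 1) / k by positivity)
    rw [Real.log_div (by positivity) hk'.ne'] at h
    have h' := mul_le_mul_of_nonneg_left h hk'.le
    have hone : (k : ℝ) * ((k + 1) / k - 1) = 1 := by
      field_simp
      ring
    linarith

theorem ell_succ_sub_le {n : ℕ} (hn : 1 ≤ n) (k : ℕ) :
    ell n (k + 1) - ell n k ≤ Real.log (Real.exp 2 * n / (k + 1)) := by
  rw [ell_eq hn, ell_eq hn, log_exp_mul_natCast_div 2 hn (by positivity)]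
  push_cast
  linarith [natCast_mul_log_le_mul_log_succ k]

theorem le_ell_succ_sub {n : ℕ} (hn : 1 ≤ n) (k : ℕ) :
    Real.log (Real.exp 1 * n / (k + 1)) ≤ ell n (k + 1) - ell n k := by
  rw [ell_eq hn, ell_eq hn, log_exp_mul_natCast_div 1 hn (by positivity)]
  push_cast
  linarith [natCast_mul_log_succ_le k]

theorem stmt_17 (n : ℕ) (hn : 1 ≤ n) (A σ : ℝ) (hA : 0 < A) (hσ : 0 < σ)
    (θ : Fin n → ℝ) (Istar : Finset (Fin n))
    (hmin : ∀ I : Finset (Fin n),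
      (∑ i ∈ Istarᶜ, θ i ^ 2) + A * σ ^ 2 * ell n Istar.card
        ≤ (∑ i ∈ Iᶜ, θ i ^ 2) + A * σ ^ 2 * ell n I.card) :
    (∀ i : Fin n,
      A * σ ^ 2 * Real.log (Real.exp 2 * n / (Istar.card + 1)) < θ i ^ 2 → i ∈ Istar) ∧
    (∀ i ∈ Istar, A * σ ^ 2 * Real.log (Real.exp 1 * n / Istar.card) ≤ θ i ^ 2) := by
  have hAσ : 0 ≤ A * σ ^ 2 := by positivity
  refine ⟨fun i hi => ?_, fun i hi => ?_⟩
  · by_contra hmem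
    have h := hmin (insert i Istar)
    rw [card_insert_of_notMem hmem, compl_insert] at h
    have hsum := add_sum_erase Istarᶜ (fun j => θ j ^ 2) (mem_compl.2 hmem)
    have hpen := mul_le_mul_of_nonneg_left (ell_succ_sub_le hn Istar.card) hAσ
    linarith
  · have h := hmin (Istar.erase i)
    rw [compl_erase, sum_insert (by simpa using hi), ← card_erase_add_one hi] at h
    have hpen := mul_le_mul_of_nonneg_left (le_ell_succ_sub hn (Istar.erase i).card) hAσ
    rw [← card_erase_add_one hi]
    push_cast
    linarith
end

section
/- Let n ≥ 1, A > 0, σ > 0, q = e², θ ∈ ℝⁿ, let S(θ) := {i ∈ [n] : θ_i ≠ 0} with s := |S(θ)| ≥ 1, and suppose θ_i² ≥ Aσ²·log(qn/s) for every i ∈ S(θ). Then for every A′ ∈ (0, A], the support S(θ) is a minimizer over I ⊆ [n] of the criterion r²_{A′}(I,θ) := ∑_{i∉I} θ_i² + A′σ²·|I|·log(qn/|I|) (with the convention that the penalty is 0 for I = ∅); that is, the active set at every level A′ ≤ A can be taken equal to the support of θ. -/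
open MeasureTheory Finset
open scoped Classical

/-- The penalty `k ↦ k * log (e² n / k)` is nondecreasing on `{0, …, n}`. -/
lemma ell_mono {n a b : ℕ} (hab : a ≤ b) (hbn : b ≤ n) : ell n a ≤ ell n b := by
  unfold ell
  rcases Nat.eq_zero_or_pos b with rfl | hb
  · simp [Nat.le_zero.mp hab]
  have hb' : (0 : ℝ) < b := by exact_mod_cast hb
  have hbn' : (b : ℝ) ≤ n := by exact_mod_cast hbn
  have hab' : (a : ℝ) ≤ b := by exact_mod_cast hab
  have hn' : (0 : ℝ) < n := hb'.trans_le hbn'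
  have hlog : 2 ≤ Real.log (Real.exp 2 * n / b) := by
    rw [Real.le_log_iff_exp_le (by positivity), le_div_iff₀ hb']
    gcongr
  rcases Nat.eq_zero_or_pos a with rfl | ha
  · simp only [Nat.cast_zero, zero_mul]
    positivity
  have ha' : (0 : ℝ) < a := by exact_mod_cast ha
  have hsplit : Real.log (Real.exp 2 * n / a)
      = Real.log (Real.exp 2 * n / b) + Real.log (b / a) := by
    rw [← Real.log_mul (by positivity) (by positivity)]
    congr 1
    field_simp
  have hgap : (a : ℝ) * Real.log (b / a) ≤ b - a := by
    calc (a : ℝ) * Real.log (b / a) ≤ a * (b / a - 1) := by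
          gcongr
          exact Real.log_le_sub_one_of_pos (by positivity)
      _ = b - a := by field_simp
  rw [hsplit]
  nlinarith [mul_nonneg (sub_nonneg.mpr hab') (sub_nonneg.mpr hlog)]

lemma mul_log_le_ell {n k s : ℕ} (hks : k ≤ s) (hsn : s ≤ n) :
    (k : ℝ) * Real.log (Real.exp 2 * n / s) ≤ ell n k := by
  unfold ell
  rcases Nat.eq_zero_or_pos k with rfl | hk
  · simp
  have hs : 0 < s := hk.trans_le hks
  have hn : 0 < n := hs.trans_le hsn
  gcongr

theorem stmt_18 (n : ℕ) (hn : 1 ≤ n) (A σ : ℝ) (hA : 0 < A) (hσ : 0 < σ)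
    (θ : Fin n → ℝ) (S : Finset (Fin n)) (hS : S = Finset.univ.filter fun i => θ i ≠ 0)
    (hs : 1 ≤ S.card)
    (hsig : ∀ i ∈ S, A * σ ^ 2 * Real.log (Real.exp 2 * n / S.card) ≤ θ i ^ 2) :
    ∀ A' : ℝ, 0 < A' → A' ≤ A → ∀ I : Finset (Fin n),
      (∑ i ∈ Sᶜ, θ i ^ 2) + A' * σ ^ 2 * ell n S.card
        ≤ (∑ i ∈ Iᶜ, θ i ^ 2) + A' * σ ^ 2 * ell n I.card := by
  intro A' hA' hAA' I
  have hcard (T : Finset (Fin n)) : T.card ≤ n := by simpa using T.card_le_univ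
  set L := Real.log (Real.exp 2 * n / S.card) with hL
  have hLnonneg : 0 ≤ L := by
    have hs' : (0 : ℝ) < S.card := by exact_mod_cast hs
    have hsn : (S.card : ℝ) ≤ n := by exact_mod_cast hcard S
    apply Real.log_nonneg
    rw [le_div_iff₀ hs']
    gcongr
    exact Real.one_le_exp (by norm_num)
  have hoff : ∑ i ∈ Sᶜ, θ i ^ 2 = 0 :=
    Finset.sum_eq_zero fun i hi => by simpa [hS] using hi
  have hmissed : ((S \ I).card : ℝ) * (A' * σ ^ 2 * L) ≤ ∑ i ∈ Iᶜ, θ i ^ 2 := by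
    calc ((S \ I).card : ℝ) * (A' * σ ^ 2 * L) = ∑ _i ∈ S \ I, A' * σ ^ 2 * L := by simp
      _ ≤ ∑ i ∈ S \ I, θ i ^ 2 := Finset.sum_le_sum fun i hi =>
          le_trans (by gcongr) (hsig i (Finset.mem_sdiff.mp hi).1)
      _ ≤ ∑ i ∈ Iᶜ, θ i ^ 2 := Finset.sum_le_sum_of_subset_of_nonneg
          (fun i hi => Finset.mem_compl.mpr (Finset.mem_sdiff.mp hi).2)
          fun i _ _ => sq_nonneg _
  have hkept : ((S ∩ I).card : ℝ) * L ≤ ell n I.card :=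
    (mul_log_le_ell (Finset.card_le_card Finset.inter_subset_left) (hcard S)).trans
      (ell_mono (Finset.card_le_card Finset.inter_subset_right) (hcard I))
  have hpart : ((S \ I).card : ℝ) + (S ∩ I).card = S.card := by
    exact_mod_cast Finset.card_sdiff_add_card_inter S I
  calc (∑ i ∈ Sᶜ, θ i ^ 2) + A' * σ ^ 2 * ell n S.card
      = ((S \ I).card : ℝ) * (A' * σ ^ 2 * L) + A' * σ ^ 2 * ((S ∩ I).card * L) := by
        rw [hoff, ell, ← hL, ← hpart]
        ring
    _ ≤ (∑ i ∈ Iᶜ, θ i ^ 2) + A' * σ ^ 2 * ell n I.card := by gcongr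
end

section
/- Let n ≥ 1, K > 0, σ > 0, q = e², θ ∈ ℝⁿ, let ℙ_θ be the law of X ∈ ℝⁿ, ξ := (X − θ)/σ, ℓ(k) := k·log(qn/k) with ℓ(0) := 0, and let Ĩ be a measurable selection of argmin_{I ⊆ [n]} { ∑_{i∉I} X_i² + Kσ²ℓ(|I|) }. Then, without any assumption on the distribution of ξ, for all subsets I, I₀ ⊆ [n]: (a) if I₀ ⊆ I, then ℙ_θ( Ĩ = I ) ≤ ℙ_θ( ∑_{i∈I∖I₀} ξ_i² ≥ (K/2)·(ℓ(|I|) − ℓ(|I₀|)) − ∑_{i∈I∖I₀} θ_i²/σ² ); (b) if I ⊆ I₀, then ℙ_θ( Ĩ = I ) ≤ ℙ_θ( ∑_{i∈I₀∖I} ξ_i² ≥ ∑_{i∈I₀∖I} θ_i²/(2σ²) + K·(ℓ(|I|) − ℓ(|I₀|)) ). -/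
open MeasureTheory Finset
open scoped Classical

/-- Passing from the complement of `A` to that of a larger set `B` removes the sum over `B \ A`. -/
theorem sum_compl_eq_sum_sdiff_add_sum_compl {α M : Type*} [Fintype α] [DecidableEq α]
    [AddCommMonoid M] {A B : Finset α} (h : A ⊆ B) (f : α → M) :
    ∑ i ∈ Aᶜ, f i = ∑ i ∈ B \ A, f i + ∑ i ∈ Bᶜ, f i := by
  rw [← Finset.sum_sdiff (Finset.compl_subset_compl.mpr h), compl_sdiff_compl]

theorem sq_div_sq_le_two_mul_add {σ : ℝ} (x t : ℝ) :
    x ^ 2 / σ ^ 2 ≤ 2 * (t ^ 2 / σ ^ 2 + ((x - t) / σ) ^ 2) := by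
  have h := add_sq_le (a := t / σ) (b := (x - t) / σ)
  rwa [← add_div, add_sub_cancel, div_pow, div_pow t] at h

theorem sq_div_two_mul_sq_le_add {σ : ℝ} (x t : ℝ) :
    t ^ 2 / (2 * σ ^ 2) ≤ x ^ 2 / σ ^ 2 + ((x - t) / σ) ^ 2 := by
  have h := sq_div_sq_le_two_mul_add (σ := σ) t x
  rw [← neg_sub x t, neg_div, neg_sq] at h
  rw [mul_comm, ← div_div]
  linarith

theorem stmt_19 (n : ℕ) (hn : 1 ≤ n) (K σ : ℝ) (hK : 0 < K) (hσ : 0 < σ)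
    (θ : Fin n → ℝ) (P : Measure (Fin n → ℝ))
    (Itil : (Fin n → ℝ) → Finset (Fin n))
    (hItil : ∀ (x : Fin n → ℝ) (I : Finset (Fin n)),
      (∑ i ∈ (Itil x)ᶜ, x i ^ 2) + K * σ ^ 2 * ell n (Itil x).card
        ≤ (∑ i ∈ Iᶜ, x i ^ 2) + K * σ ^ 2 * ell n I.card) :
    (∀ I I₀ : Finset (Fin n), I₀ ⊆ I →
      P {x | Itil x = I}
        ≤ P {x | K / 2 * (ell n I.card - ell n I₀.card) -
              (∑ i ∈ I \ I₀, θ i ^ 2 / σ ^ 2)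
            ≤ ∑ i ∈ I \ I₀, ((x i - θ i) / σ) ^ 2}) ∧
    (∀ I I₀ : Finset (Fin n), I ⊆ I₀ →
      P {x | Itil x = I}
        ≤ P {x | (∑ i ∈ I₀ \ I, θ i ^ 2 / (2 * σ ^ 2)) +
              K * (ell n I.card - ell n I₀.card)
            ≤ ∑ i ∈ I₀ \ I, ((x i - θ i) / σ) ^ 2}) := by
  have hσ2 : 0 < σ ^ 2 := by positivity
  refine ⟨fun I I₀ h => measure_mono fun x hx => ?_, fun I I₀ h => measure_mono fun x hx => ?_⟩
  · have hmin := hItil x I₀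
    rw [show Itil x = I from hx, sum_compl_eq_sum_sdiff_add_sum_compl h] at hmin
    have hpen : K * (ell n I.card - ell n I₀.card) ≤ ∑ i ∈ I \ I₀, x i ^ 2 / σ ^ 2 := by
      rw [← Finset.sum_div, le_div_iff₀ hσ2]
      linarith
    have hsq := Finset.sum_le_sum fun i (_ : i ∈ I \ I₀) =>
      sq_div_sq_le_two_mul_add (σ := σ) (x i) (θ i)
    rw [← Finset.mul_sum, Finset.sum_add_distrib] at hsq
    rw [Set.mem_ofPred_eq]
    linarith
  · have hmin := hItil x I₀
    rw [show Itil x = I from hx, sum_compl_eq_sum_sdiff_add_sum_compl h] at hmin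
    have hpen : ∑ i ∈ I₀ \ I, x i ^ 2 / σ ^ 2 ≤ K * (ell n I₀.card - ell n I.card) := by
      rw [← Finset.sum_div, div_le_iff₀ hσ2]
      linarith
    have hsq := Finset.sum_le_sum fun i (_ : i ∈ I₀ \ I) =>
      sq_div_two_mul_sq_le_add (σ := σ) (x i) (θ i)
    rw [Finset.sum_add_distrib] at hsq
    rw [Set.mem_ofPred_eq]
    linarith
end
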